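/- Under the interpolation setting, let B ⊆ {1,…,M} be a batch of size b, let w_i ≥ 0 for i ∈ B with Σ_{i∈B} w_i = 1, let 0 < η ≤ 1/(4bL·max_{i∈B} w_i), and set θ' = θ − η·Σ_{i∈B} w_i ∇f_i(θ). Then ‖θ' − θ*‖² ≤ ‖θ − θ*‖² − (η/b)·Σ_{i∈B}(f_i(θ) − f_i(θ*)) + η·Σ_{i∈B}(1/b − w_i)·(f_i(θ) − f_i(θ*)). -/

import Mathlib

open scoped InnerProductSpace BigOperators

/-!
Only the weighted objective `F = ∑ i ∈ B, w i * f i` matters. As the weights are a convex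
combination, `∇F` is `L`-Lipschitz, so along the segment from `x` to `x - 2η ∇F(x)` the function
decreases by at least `η ‖∇F(x)‖²` as soon as `2ηL ≤ 1`; minimality of `F(x⋆)` therefore yields
`η ‖∇F(x)‖² ≤ F(x) - F(x⋆)`. Expanding `‖x - η ∇F(x) - x⋆‖²`, convexity contributes
`-2η (F(x) - F(x⋆))` and the quadratic term gives back at most half of it.
-/

section DescentLemma

variable {E F : Type*} [NormedAddCommGroup E] [NormedSpace ℝ E]
  [NormedAddCommGroup F] [NormedSpace ℝ F] {K : NNReal}

theorem norm_image_add_sub_sub_le_of_lipschitzWith_fderiv {f : E → F} {f' : E → E →L[ℝ] F}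
    (hf : ∀ x, HasFDerivAt f (f' x) x) (hf' : LipschitzWith K f') (x v : E) :
    ‖f (x + v) - f x - f' x v‖ ≤ K / 2 * ‖v‖ ^ 2 := by
  let r : ℝ → F := fun t => f (x + t • v) - f x - t • f' x v
  have hline (t : ℝ) : HasDerivAt (fun s : ℝ => x + s • v) v t := by
    simpa only [one_smul] using ((hasDerivAt_id' t).smul_const v).const_add x
  have hr (t : ℝ) : HasDerivAt r (f' (x + t • v) v - f' x v) t := by
    have hlinear : HasDerivAt (fun s : ℝ => s • f' x v) (f' x v) t := by
      simpa only [one_smul] using (hasDerivAt_id' t).smul_const (f' x v)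
    exact (((hf _).comp_hasDerivAt t (hline t)).sub_const (f x)).sub hlinear
  have hbound (t : ℝ) :
      HasDerivAt (fun s : ℝ => K / 2 * ‖v‖ ^ 2 * s ^ 2) (K * ‖v‖ ^ 2 * t) t := by
    refine ((hasDerivAt_pow 2 t).const_mul (K / 2 * ‖v‖ ^ 2)).congr_deriv ?_
    ring
  have hderiv_le : ∀ t ∈ Set.Ico (0 : ℝ) 1, ‖f' (x + t • v) v - f' x v‖ ≤ K * ‖v‖ ^ 2 * t := by
    intro t ht
    calc ‖f' (x + t • v) v - f' x v‖ ≤ ‖f' (x + t • v) - f' x‖ * ‖v‖ :=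
          (f' (x + t • v) - f' x).le_opNorm v
      _ ≤ K * ‖x + t • v - x‖ * ‖v‖ := by gcongr; exact hf'.norm_sub_le _ _
      _ = K * ‖v‖ ^ 2 * t := by
          rw [add_sub_cancel_left, norm_smul, Real.norm_of_nonneg ht.1]; ring
  have hr_le : ‖r 1‖ ≤ K / 2 * ‖v‖ ^ 2 * 1 ^ 2 :=
    image_norm_le_of_norm_deriv_right_le_deriv_boundary
      (fun t _ => (hr t).continuousAt.continuousWithinAt)
      (fun t _ => (hr t).hasDerivWithinAt) (by simp [r]) hbound hderiv_le
      (Set.right_mem_Icc.2 zero_le_one)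
  simpa only [r, one_smul, one_pow, mul_one] using hr_le

end DescentLemma

section GradientStep

variable {E : Type*} [NormedAddCommGroup E] [InnerProductSpace ℝ E] [CompleteSpace E]
  {f : E → ℝ} {f' : E → E} {K : NNReal}

theorem image_add_le_of_lipschitzWith_gradient (hf : ∀ x, HasGradientAt f (f' x) x)
    (hf' : LipschitzWith K f') (x v : E) :
    f (x + v) ≤ f x + ⟪f' x, v⟫_ℝ + K / 2 * ‖v‖ ^ 2 := by
  have hdual : LipschitzWith K (InnerProductSpace.toDual ℝ E ∘ f') := by
    simpa only [one_mul] using (InnerProductSpace.toDual ℝ E).lipschitz.comp hf'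
  have hrem := (le_abs_self _).trans
    (norm_image_add_sub_sub_le_of_lipschitzWith_fderiv (fun y => (hf y).hasFDerivAt) hdual x v)
  rw [InnerProductSpace.toDual_apply_apply] at hrem
  linarith

theorem image_sub_smul_gradient_le (hf : ∀ x, HasGradientAt f (f' x) x)
    (hf' : LipschitzWith K f') (x : E) (t : ℝ) :
    f (x - t • f' x) ≤ f x - t * (1 - K * t / 2) * ‖f' x‖ ^ 2 := by
  have h := image_add_le_of_lipschitzWith_gradient hf hf' x (-(t • f' x))
  rw [← sub_eq_add_neg, inner_neg_right, real_inner_smul_right, real_inner_self_eq_norm_sq,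
    norm_neg, norm_smul, mul_pow, Real.norm_eq_abs, sq_abs] at h
  linarith

theorem mul_sq_norm_gradient_le_sub (hf : ∀ x, HasGradientAt f (f' x) x)
    (hf' : LipschitzWith K f') {m : ℝ} (hm : ∀ y, m ≤ f y) {η : ℝ} (hη : 0 ≤ η)
    (hηK : 2 * (η * K) ≤ 1) (x : E) :
    η * ‖f' x‖ ^ 2 ≤ f x - m := by
  have hcoeff : η ≤ 2 * η * (1 - K * (2 * η) / 2) := by nlinarith
  have hstep := (hm _).trans (image_sub_smul_gradient_le hf hf' x (2 * η))
  calc η * ‖f' x‖ ^ 2 ≤ 2 * η * (1 - K * (2 * η) / 2) * ‖f' x‖ ^ 2 := by gcongr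
    _ ≤ f x - m := by linarith

theorem sq_norm_sub_smul_gradient_sub_le (hf : ∀ x, HasGradientAt f (f' x) x)
    (hf' : LipschitzWith K f') {xs : E} (hmin : ∀ y, f xs ≤ f y) {η : ℝ} (hη : 0 ≤ η)
    (hηK : 2 * (η * K) ≤ 1) {x : E} (hconv : f x + ⟪f' x, xs - x⟫_ℝ ≤ f xs) :
    ‖x - η • f' x - xs‖ ^ 2 ≤ ‖x - xs‖ ^ 2 - η * (f x - f xs) := by
  have hinner : f x - f xs ≤ ⟪x - xs, f' x⟫_ℝ := by
    rw [← neg_sub, inner_neg_right, real_inner_comm] at hconv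
    linarith
  have hgrad := mul_sq_norm_gradient_le_sub hf hf' hmin hη hηK x
  calc ‖x - η • f' x - xs‖ ^ 2
      = ‖x - xs‖ ^ 2 - 2 * (η * ⟪x - xs, f' x⟫_ℝ) + η * (η * ‖f' x‖ ^ 2) := by
        rw [sub_right_comm, norm_sub_sq_real, real_inner_smul_right, norm_smul,
          Real.norm_of_nonneg hη]
        ring
    _ ≤ ‖x - xs‖ ^ 2 - 2 * (η * (f x - f xs)) + η * (f x - f xs) := by gcongr
    _ = ‖x - xs‖ ^ 2 - η * (f x - f xs) := by ring

end GradientStep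

section WeightedSum

variable {ι : Type*} {s : Finset ι} {w : ι → ℝ}

theorem hasGradientAt_sum_mul {E : Type*} [NormedAddCommGroup E] [InnerProductSpace ℝ E]
    [CompleteSpace E] {f : ι → E → ℝ} {f' : ι → E} {x : E}
    (hf : ∀ i ∈ s, HasGradientAt (f i) (f' i) x) :
    HasGradientAt (fun y => ∑ i ∈ s, w i * f i y) (∑ i ∈ s, w i • f' i) x := by
  rw [hasGradientAt_iff_hasFDerivAt, map_sum]
  simp only [map_smul]
  exact HasFDerivAt.fun_sum fun i hi => (hf i hi).hasFDerivAt.const_mul (w i)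

theorem lipschitzWith_sum_smul {X E : Type*} [PseudoMetricSpace X] [SeminormedAddCommGroup E]
    [NormedSpace ℝ E] {K : NNReal} {g : ι → X → E} (hg : ∀ i ∈ s, LipschitzWith K (g i))
    (hw0 : ∀ i ∈ s, 0 ≤ w i) (hw1 : ∑ i ∈ s, w i = 1) :
    LipschitzWith K fun x => ∑ i ∈ s, w i • g i x := by
  refine LipschitzWith.of_dist_le_mul fun x y => ?_
  calc dist (∑ i ∈ s, w i • g i x) (∑ i ∈ s, w i • g i y)
      ≤ ∑ i ∈ s, dist (w i • g i x) (w i • g i y) := dist_sum_sum_le _ _ _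
    _ ≤ ∑ i ∈ s, w i * (K * dist x y) := by
        refine Finset.sum_le_sum fun i hi => ?_
        rw [dist_smul₀, Real.norm_of_nonneg (hw0 i hi)]
        exact mul_le_mul_of_nonneg_left ((hg i hi).dist_le_mul x y) (hw0 i hi)
    _ = K * dist x y := by rw [← Finset.sum_mul, hw1, one_mul]

theorem four_mul_le_one_of_le_one_div_card_mul_sup' (hs : s.Nonempty) (hw1 : ∑ i ∈ s, w i = 1)
    {L η : ℝ} (hL : 0 < L) (hη : η ≤ 1 / (4 * (s.card : ℝ) * L * s.sup' hs w)) :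
    4 * (η * L) ≤ 1 := by
  have hsup : 1 ≤ (s.card : ℝ) * s.sup' hs w := by
    rw [← hw1, ← nsmul_eq_mul]
    exact Finset.sum_le_card_nsmul _ _ _ fun i hi => Finset.le_sup' w hi
  have hη' : η ≤ 1 / (4 * L) := by
    refine hη.trans (one_div_le_one_div_of_le (by positivity) ?_)
    calc 4 * L ≤ 4 * L * (s.card * s.sup' hs w) := le_mul_of_one_le_right (by positivity) hsup
      _ = 4 * (s.card : ℝ) * L * s.sup' hs w := by ring
  rw [le_div_iff₀ (by positivity)] at hη'
  linarith

end WeightedSum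

theorem stmt_7_general {ι E : Type*} [NormedAddCommGroup E] [InnerProductSpace ℝ E]
    [CompleteSpace E] {L : NNReal} {f : ι → E → ℝ} {f' : ι → E → E} {B : Finset ι} {w : ι → ℝ}
    (hf : ∀ i ∈ B, ∀ x, HasGradientAt (f i) (f' i x) x)
    (hf' : ∀ i ∈ B, LipschitzWith L (f' i))
    (hw0 : ∀ i ∈ B, 0 ≤ w i) (hw1 : ∑ i ∈ B, w i = 1)
    {xs : E} (hmin : ∀ y, ∑ i ∈ B, w i * f i xs ≤ ∑ i ∈ B, w i * f i y)
    {η : ℝ} (hη : 0 ≤ η) (hηL : 2 * (η * L) ≤ 1)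
    {x : E} (hconv : ∀ i ∈ B, f i x + ⟪f' i x, xs - x⟫_ℝ ≤ f i xs) :
    ‖x - η • ∑ i ∈ B, w i • f' i x - xs‖ ^ 2
      ≤ ‖x - xs‖ ^ 2
        - (η / (B.card : ℝ)) * ∑ i ∈ B, (f i x - f i xs)
        + η * ∑ i ∈ B, ((1 / (B.card : ℝ)) - w i) * (f i x - f i xs) := by
  have hconv_sum : ∑ i ∈ B, w i * f i x + ⟪∑ i ∈ B, w i • f' i x, xs - x⟫_ℝ
      ≤ ∑ i ∈ B, w i * f i xs := by
    simp only [sum_inner, real_inner_smul_left, ← Finset.sum_add_distrib, ← mul_add]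
    exact Finset.sum_le_sum fun i hi => mul_le_mul_of_nonneg_left (hconv i hi) (hw0 i hi)
  refine (sq_norm_sub_smul_gradient_sub_le (fun y => hasGradientAt_sum_mul fun i hi => hf i hi y)
    (lipschitzWith_sum_smul hf' hw0 hw1) hmin hη hηL hconv_sum).trans_eq ?_
  simp only [sub_mul, mul_sub, Finset.sum_sub_distrib, ← Finset.mul_sum]
  ring

/-- One step of reweighted minibatch gradient descent under the interpolation
regime, with step size `0 < η ≤ 1/(4bL·max_{i∈B} w_i)`: descent inequality with
the reweighting excess term. -/
theorem stmt_7 {d M : ℕ} (L : ℝ) (hL : 0 < L)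
    (f : Fin M → EuclideanSpace ℝ (Fin d) → ℝ)
    (hdiff : ∀ i, Differentiable ℝ (f i))
    (hconv : ∀ i, ∀ θ₁ θ₂ : EuclideanSpace ℝ (Fin d),
      f i θ₂ + ⟪gradient (f i) θ₂, θ₁ - θ₂⟫_ℝ ≤ f i θ₁)
    (hsmooth : ∀ i, ∀ θ θ' : EuclideanSpace ℝ (Fin d),
      ‖gradient (f i) θ - gradient (f i) θ'‖ ≤ L * ‖θ - θ'‖)
    (θstar : EuclideanSpace ℝ (Fin d))
    (hinterp : ∀ i θ, f i θstar ≤ f i θ)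
    (B : Finset (Fin M)) (hB : B.Nonempty) (b : ℕ) (hb : B.card = b)
    (w : Fin M → ℝ)
    (hw0 : ∀ i ∈ B, 0 ≤ w i)
    (hw1 : ∑ i ∈ B, w i = 1)
    (η : ℝ) (hη0 : 0 < η)
    (hη1 : η ≤ 1 / (4 * (b : ℝ) * L * B.sup' hB w))
    (θ θ' : EuclideanSpace ℝ (Fin d))
    (hupd : θ' = θ - η • ∑ i ∈ B, w i • gradient (f i) θ) :
    ‖θ' - θstar‖ ^ 2
      ≤ ‖θ - θstar‖ ^ 2
        - (η / (b : ℝ)) * ∑ i ∈ B, (f i θ - f i θstar)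
        + η * ∑ i ∈ B, ((1 / (b : ℝ)) - w i) * (f i θ - f i θstar) := by
  subst hb hupd
  have hηL := four_mul_le_one_of_le_one_div_card_mul_sup' hB hw1 hL hη1
  lift L to NNReal using hL.le
  exact stmt_7_general (fun i _ x => (hdiff i x).hasGradientAt)
    (fun i _ => LipschitzWith.of_dist_le_mul fun x y => by
      simpa only [dist_eq_norm] using hsmooth i x y)
    hw0 hw1
    (fun y => Finset.sum_le_sum fun i hi => mul_le_mul_of_nonneg_left (hinterp i y) (hw0 i hi))
    hη0.le (by linarith) (fun i _ => hconv i θstar θ)
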